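/- For all integers p ≥ 1 and k ≥ 1, the number of noncrossing pair partitions of {1,...,2pk} adapted to W_0^k is the Fuss-Catalan number: (pk + 1) · |NC²_{2pk}(W_0^k)| = C((p+1)k, k). -/

import Mathlib

/-- The letter at position `r` (1-based, `1 ≤ r ≤ 2p`) of the word
`W₀ = 1 2 … p p* … 2* 1*`; here `(l, false)` encodes the letter `l` and
`(l, true)` encodes the starred letter `l*`. -/
def letter0 (p r : ℕ) : ℕ × Bool :=
  if r ≤ p then (r, false) else (2 * p + 1 - r, true)

/-- The label of position `m` (1-based) under the periodic word `Wᵢᵏ`, where `Wᵢ`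
is the cyclic shift of `W₀` to the right by `i` positions. -/
def labelW (p i m : ℕ) : ℕ × Bool :=
  letter0 p ((m - 1 + (2 * p - i)) % (2 * p) + 1)

/-- `π` is a noncrossing pair partition of `{1, …, m}`, encoded as the finite set of
its blocks, each block written as an ordered pair `(a, b)` with `a < b`:
all entries lie in `{1, …, m}`, every point of `{1, …, m}` is covered, distinct
blocks are disjoint, and no two blocks cross. -/
def IsNCPP (m : ℕ) (π : Finset (ℕ × ℕ)) : Prop :=
  (∀ b ∈ π, 1 ≤ b.1 ∧ b.2 ≤ m ∧ b.1 < b.2) ∧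
  (∀ x, 1 ≤ x → x ≤ m → ∃ b ∈ π, x = b.1 ∨ x = b.2) ∧
  (∀ b ∈ π, ∀ c ∈ π, (b.1 = c.1 ∨ b.1 = c.2 ∨ b.2 = c.1 ∨ b.2 = c.2) → b = c) ∧
  (∀ b ∈ π, ∀ c ∈ π, ¬(b.1 < c.1 ∧ c.1 < b.2 ∧ b.2 < c.2))

/-- `π ∈ NC²₂ₚₖ(Wᵢᵏ)`: a noncrossing pair partition of `{1, …, 2pk}` each of whose
blocks consists of a position labelled `l` and a position labelled `l*` for some
`l ∈ {1, …, p}` (labels taken from the word `Wᵢᵏ`). -/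
def AdaptedNCPP (p i k : ℕ) (π : Finset (ℕ × ℕ)) : Prop :=
  IsNCPP (2 * p * k) π ∧
  ∀ b ∈ π, ∃ l, 1 ≤ l ∧ l ≤ p ∧
    ((labelW p i b.1 = (l, false) ∧ labelW p i b.2 = (l, true)) ∨
     (labelW p i b.1 = (l, true) ∧ labelW p i b.2 = (l, false)))

/-- The right-leg statistic `jₗ(π) = |R_{l+1}(π)| + |R_{l}*(π)|`: the number of blocks
whose right leg (larger element) is labelled `l+1`, plus the number of blocks whose
right leg is labelled `l*` (the conventions `R₀* = R_{p+1} = ∅` hold automatically,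
since those labels never occur). -/
def jstat (p i : ℕ) (π : Finset (ℕ × ℕ)) (l : ℕ) : ℕ :=
  (π.filter fun b => labelW p i b.2 = (l + 1, false)).card +
  (π.filter fun b => labelW p i b.2 = (l, true)).card

open Classical in
/-- The finset `NC²₂ₚₖ(Wᵢᵏ)` of noncrossing pair partitions of `{1, …, 2pk}`
adapted to `Wᵢᵏ`. -/
noncomputable def NCset (p i k : ℕ) : Finset (Finset (ℕ × ℕ)) :=
  (Finset.Icc 1 (2 * p * k) ×ˢ Finset.Icc 1 (2 * p * k)).powerset.filter
    (AdaptedNCPP p i k)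

open Classical in
/-- `Nᵢ(k, (j₀, …, j_p))`: the number of `π ∈ NC²₂ₚₖ(Wᵢᵏ)` with `jₗ(π) = jₗ`
for all `0 ≤ l ≤ p`. -/
noncomputable def Ncount (p i k : ℕ) (j : Fin (p + 1) → ℕ) : ℕ :=
  ((NCset p i k).filter fun π => ∀ l : Fin (p + 1), jstat p i π (l : ℕ) = j l).card

/-- The generating function `𝒩ᵢ(x, d) = Σ_k (Σ_j Nᵢ(k, j) d^j) x^k ∈ ℝ[[x]]`;
for each `k` only finitely many of the counts `Nᵢ(k, j)` are nonzero, so the inner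
`tsum` is a finite sum. -/
noncomputable def genFun (p i : ℕ) (d : Fin (p + 1) → ℝ) : PowerSeries ℝ :=
  PowerSeries.mk fun k =>
    ∑' j : Fin (p + 1) → ℕ, (Ncount p i k j : ℝ) * ∏ l, d l ^ j l

/-!
A position of residue `r` carries the partner letter of a position of residue `s` exactly when
`r + s = 2p + 1`, so a block `{x, y}` is adapted to `W₀ᵏ` if and only if `x + y ≡ 1` modulo `2p`.
Call an interval balanced if it has length `2pk`, or if it has length `2(pk + d)` and starts at
`a + 1`, where `d ≤ p` and `p` divides `a + d`.  Removing the block of the first point of a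
noncrossing pairing leaves pairings of two shorter balanced intervals.  In terms of the power
series `F = 1 + x F ^ (p + 1)`, the resulting recursions say that a balanced interval of the first
kind has as many pairings as the coefficient of `x ^ k` in `F`, and one of the second kind as many
as the coefficient of `x ^ k` in `F ^ (d + 1)`.
-/

open Finset

section Raney

/-- The Raney (two-parameter Fuss–Catalan) number `r / ((p + 1) k + r) * C((p + 1) k + r, k)`, the
coefficient of `x ^ k` in `F ^ r` where `F = 1 + x F ^ (p + 1)`.  The recursion comes from
`F ^ (r + 1) = F ^ r + x F ^ (r + 1 + p)`. -/
def raney (p : ℕ) : ℕ → ℕ → ℕ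
  | 0, _ => 1
  | _ + 1, 0 => 0
  | k + 1, r + 1 => raney p (k + 1) r + raney p k (r + 1 + p)

theorem raney_zero_left (p r : ℕ) : raney p 0 r = 1 := by
  rw [raney]

theorem raney_succ_zero (p k : ℕ) : raney p (k + 1) 0 = 0 := by
  rw [raney]

theorem raney_succ_succ (p k r : ℕ) :
    raney p (k + 1) (r + 1) = raney p (k + 1) r + raney p k (r + 1 + p) := by
  rw [raney]

theorem raney_succ_one (p k : ℕ) : raney p (k + 1) 1 = raney p k (p + 1) := by
  rw [raney_succ_succ, raney_succ_zero, zero_add, zero_add, add_comm]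

theorem raney_add (p k r s : ℕ) :
    raney p k (r + s) = ∑ ij ∈ antidiagonal k, raney p ij.1 r * raney p ij.2 s := by
  induction k generalizing r with
  | zero => simp [raney_zero_left]
  | succ k ihk =>
    induction r with
    | zero => simp [Nat.sum_antidiagonal_succ, raney_zero_left, raney_succ_zero]
    | succ r ihr =>
      rw [Nat.sum_antidiagonal_succ] at ihr ⊢
      simp only [raney_succ_succ, raney_zero_left, add_mul, sum_add_distrib] at ihr ⊢
      rw [← add_assoc, ← ihr, ← ihk, add_right_comm r 1 s, raney_succ_succ]
      congr 2
      omega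

theorem add_mul_raney (p k r : ℕ) :
    ((p + 1) * k + r) * raney p k r = r * ((p + 1) * k + r).choose k := by
  induction k generalizing r with
  | zero => simp [raney_zero_left]
  | succ k ihk =>
    induction r with
    | zero => simp [raney_succ_zero]
    | succ r ihr =>
      have ihk := ihk (r + 1 + p)
      obtain ⟨n, hn⟩ : ∃ n, n = (p + 1) * (k + 1) + r := ⟨_, rfl⟩
      have hn_pos : 0 < n := by rw [hn]; positivity
      have hchoose : n.choose (k + 1) * (k + 1) = n.choose k * (n - k) :=
        Nat.choose_succ_right_eq n k
      rw [show (p + 1) * k + (r + 1 + p) = n by rw [hn]; ring] at ihk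
      rw [← hn] at ihr
      rw [raney_succ_succ, ← add_assoc, ← hn, Nat.choose_succ_succ]
      refine Nat.eq_of_mul_eq_mul_left hn_pos ?_
      have hkn : k ≤ n := by rw [hn]; nlinarith
      zify [hkn] at *
      linear_combination (n + 1 : ℤ) * (ihr + ihk) - (p + 1) * hchoose -
        (n.choose k + n.choose (k + 1)) * hn

theorem mul_raney_one (p k : ℕ) : (p * k + 1) * raney p k 1 = ((p + 1) * k).choose k := by
  have h := add_mul_raney p k 1
  have hchoose := Nat.choose_mul_succ_eq ((p + 1) * k) k
  rw [show (p + 1) * k + 1 - k = p * k + 1 by rw [add_mul]; omega] at hchoose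
  refine Nat.eq_of_mul_eq_mul_right (Nat.succ_pos ((p + 1) * k)) ?_
  rw [Nat.succ_eq_add_one, hchoose, ← one_mul (Nat.choose _ _), ← h]
  ring

end Raney

section Pairings

variable {Q : ℕ → ℕ → Prop} {a b c : ℕ} {π σ τ : Finset (ℕ × ℕ)}

/-- `π` is a noncrossing pair partition of the interval `[a, b)` all of whose blocks `(x, y)`
satisfy `Q x y`.  Blocks are encoded as in `IsNCPP`. -/
structure IsNCPairing (Q : ℕ → ℕ → Prop) (a b : ℕ) (π : Finset (ℕ × ℕ)) : Prop where
  bounds : ∀ x ∈ π, a ≤ x.1 ∧ x.2 < b ∧ x.1 < x.2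
  cover : ∀ m, a ≤ m → m < b → ∃ x ∈ π, m = x.1 ∨ m = x.2
  eq_of_meet : ∀ x ∈ π, ∀ y ∈ π, (x.1 = y.1 ∨ x.1 = y.2 ∨ x.2 = y.1 ∨ x.2 = y.2) → x = y
  noncrossing : ∀ x ∈ π, ∀ y ∈ π, ¬(x.1 < y.1 ∧ y.1 < x.2 ∧ x.2 < y.2)
  rel : ∀ x ∈ π, Q x.1 x.2

namespace IsNCPairing

theorem exists_mem_left (h : IsNCPairing Q a b π) (hab : a < b) : ∃ c, (a, c) ∈ π := by
  obtain ⟨x, hx, hax⟩ := h.cover a le_rfl hab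
  have hbounds := h.bounds x hx
  obtain rfl : a = x.1 := by omega
  exact ⟨x.2, hx⟩

theorem eq_or_lt_or_lt (h : IsNCPairing Q a b π) (hac : (a, c) ∈ π) {x : ℕ × ℕ} (hx : x ∈ π) :
    x = (a, c) ∨ (a < x.1 ∧ x.2 < c) ∨ c < x.1 := by
  by_cases hxac : x = (a, c)
  · exact Or.inl hxac
  · have hmeet := mt (h.eq_of_meet x hx (a, c) hac) hxac
    have hcross := h.noncrossing (a, c) hac x hx
    have hbounds := h.bounds x hx
    dsimp only at hmeet hcross
    omega

theorem filter (h : IsNCPairing Q a b π) {a' b' : ℕ} (ha : a ≤ a') (hb : b' ≤ b)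
    (hsep : ∀ x ∈ π, (a' ≤ x.1 ∧ x.2 < b') ∨
      ∀ m, a' ≤ m → m < b' → m ≠ x.1 ∧ m ≠ x.2) :
    IsNCPairing Q a' b' {x ∈ π | a' ≤ x.1 ∧ x.2 < b'} where
  bounds x hx := by
    obtain ⟨hx, hxa, hxb⟩ := mem_filter.1 hx
    exact ⟨hxa, hxb, (h.bounds x hx).2.2⟩
  cover m ham hmb := by
    obtain ⟨x, hx, hmx⟩ := h.cover m (ha.trans ham) (hmb.trans_le hb)
    refine ⟨x, mem_filter.2 ⟨hx, (hsep x hx).resolve_right fun hout ↦ ?_⟩, hmx⟩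
    exact hmx.elim (hout m ham hmb).1 (hout m ham hmb).2
  eq_of_meet x hx y hy := h.eq_of_meet x (mem_filter.1 hx).1 y (mem_filter.1 hy).1
  noncrossing x hx y hy := h.noncrossing x (mem_filter.1 hx).1 y (mem_filter.1 hy).1
  rel x hx := h.rel x (mem_filter.1 hx).1

theorem filter_inside (h : IsNCPairing Q a b π) (hac : (a, c) ∈ π) :
    IsNCPairing Q (a + 1) c {x ∈ π | a + 1 ≤ x.1 ∧ x.2 < c} := by
  refine h.filter (Nat.le_succ a) (h.bounds _ hac).2.1.le fun x hx ↦ ?_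
  have hbounds := h.bounds x hx
  rcases h.eq_or_lt_or_lt hac hx with rfl | hin | hout
  · right; dsimp only; omega
  · exact Or.inl hin
  · right; omega

theorem filter_outside (h : IsNCPairing Q a b π) (hac : (a, c) ∈ π) :
    IsNCPairing Q (c + 1) b {x ∈ π | c + 1 ≤ x.1 ∧ x.2 < b} := by
  have hlt := (h.bounds _ hac).2.2
  refine h.filter (by dsimp only at hlt; omega) le_rfl fun x hx ↦ ?_
  have hbounds := h.bounds x hx
  rcases h.eq_or_lt_or_lt hac hx with rfl | hin | hout
  · right; dsimp only; omega
  · right; omega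
  · exact Or.inl ⟨hout, hbounds.2.1⟩

theorem insert_union (hσ : IsNCPairing Q (a + 1) c σ) (hτ : IsNCPairing Q (c + 1) b τ)
    (hac : a < c) (hcb : c < b) (hQ : Q a c) : IsNCPairing Q a b (insert (a, c) (σ ∪ τ)) := by
  have hσb := hσ.bounds
  have hτb := hτ.bounds
  constructor
  · simp only [mem_insert, mem_union]
    rintro x (rfl | hx | hx)
    · exact ⟨le_rfl, hcb, hac⟩
    · have := hσb x hx; omega
    · have := hτb x hx; omega
  · intro m ham hmb
    by_cases hmac : m = a ∨ m = c
    · exact ⟨(a, c), mem_insert_self _ _, hmac⟩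
    · obtain hmc | hcm : m < c ∨ c < m := by omega
      · obtain ⟨x, hx, hmx⟩ := hσ.cover m (by omega) hmc
        exact ⟨x, mem_insert_of_mem (mem_union_left τ hx), hmx⟩
      · obtain ⟨x, hx, hmx⟩ := hτ.cover m hcm hmb
        exact ⟨x, mem_insert_of_mem (mem_union_right σ hx), hmx⟩
  · simp only [mem_insert, mem_union]
    have hσ_meet := hσ.eq_of_meet
    have hτ_meet := hτ.eq_of_meet
    rintro x (rfl | hx | hx) y (rfl | hy | hy) <;> grind
  · simp only [mem_insert, mem_union]
    have hσ_cross := hσ.noncrossing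
    have hτ_cross := hτ.noncrossing
    rintro x (rfl | hx | hx) y (rfl | hy | hy) <;> grind
  · simp only [mem_insert, mem_union]
    rintro x (rfl | hx | hx)
    exacts [hQ, hσ.rel x hx, hτ.rel x hx]

theorem insert_filter_union_filter (h : IsNCPairing Q a b π) (hac : (a, c) ∈ π) :
    insert (a, c) ({x ∈ π | a + 1 ≤ x.1 ∧ x.2 < c} ∪ {x ∈ π | c + 1 ≤ x.1 ∧ x.2 < b}) = π := by
  ext x
  simp only [mem_insert, mem_union, mem_filter, ← and_or_left]
  refine ⟨?_, fun hx ↦ ?_⟩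
  · rintro (rfl | ⟨hx, -⟩)
    exacts [hac, hx]
  · refine (h.eq_or_lt_or_lt hac hx).imp_right fun hor ↦ ⟨hx, ?_⟩
    exact hor.imp id fun hout ↦ ⟨hout, (h.bounds x hx).2.1⟩

theorem filter_inside_insert_union (hσ : IsNCPairing Q (a + 1) c σ)
    (hτ : IsNCPairing Q (c + 1) b τ) :
    {x ∈ insert (a, c) (σ ∪ τ) | a + 1 ≤ x.1 ∧ x.2 < c} = σ := by
  have hσb := hσ.bounds
  have hτb := hτ.bounds
  ext x
  simp only [mem_filter, mem_insert, mem_union]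
  grind

theorem filter_outside_insert_union (hσ : IsNCPairing Q (a + 1) c σ)
    (hτ : IsNCPairing Q (c + 1) b τ) (hac : a < c) :
    {x ∈ insert (a, c) (σ ∪ τ) | c + 1 ≤ x.1 ∧ x.2 < b} = τ := by
  have hσb := hσ.bounds
  have hτb := hτ.bounds
  ext x
  simp only [mem_filter, mem_insert, mem_union]
  grind

theorem eq_empty (h : IsNCPairing Q a a π) : π = ∅ := by
  refine eq_empty_of_forall_notMem fun x hx ↦ ?_
  have hbounds := h.bounds x hx
  omega

end IsNCPairing

theorem isNCPairing_empty (Q : ℕ → ℕ → Prop) (a : ℕ) : IsNCPairing Q a a ∅ where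
  bounds := by simp
  cover m ham hma := absurd hma ham.not_gt
  eq_of_meet := by simp
  noncrossing := by simp
  rel := by simp

open Classical in
/-- The finite set of noncrossing pairings of `[a, b)` with blocks in `Q`. -/
noncomputable def ncPairings (Q : ℕ → ℕ → Prop) (a b : ℕ) : Finset (Finset (ℕ × ℕ)) :=
  {π ∈ (Ico a b ×ˢ Ico a b).powerset | IsNCPairing Q a b π}

theorem mem_ncPairings : π ∈ ncPairings Q a b ↔ IsNCPairing Q a b π := by
  classical
  refine mem_filter.trans (and_iff_right_of_imp fun h ↦ mem_powerset.2 fun x hx ↦ ?_)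
  have hbounds := h.bounds x hx
  simp only [mem_product, mem_Ico]
  omega

theorem card_ncPairings_self (Q : ℕ → ℕ → Prop) (a : ℕ) : #(ncPairings Q a a) = 1 := by
  refine card_eq_one.2 ⟨∅, ?_⟩
  ext π
  rw [mem_ncPairings, mem_singleton]
  exact ⟨IsNCPairing.eq_empty, fun h ↦ h ▸ isNCPairing_empty Q a⟩

theorem card_filter_mem_ncPairings (hac : a < c) (hcb : c < b) (hQ : Q a c) :
    #{π ∈ ncPairings Q a b | (a, c) ∈ π} =
      #(ncPairings Q (a + 1) c) * #(ncPairings Q (c + 1) b) := by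
  rw [← card_product]
  refine card_nbij'
    (fun π ↦ ({x ∈ π | a + 1 ≤ x.1 ∧ x.2 < c}, {x ∈ π | c + 1 ≤ x.1 ∧ x.2 < b}))
    (fun στ ↦ insert (a, c) (στ.1 ∪ στ.2)) ?_ ?_ ?_ ?_
  all_goals simp only [Set.MapsTo, Set.LeftInvOn, Set.RightInvOn, SetLike.mem_coe, mem_filter,
    mem_product, mem_ncPairings]
  · rintro π ⟨h, hmem⟩
    exact ⟨h.filter_inside hmem, h.filter_outside hmem⟩
  · rintro ⟨σ, τ⟩ ⟨hσ, hτ⟩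
    exact ⟨hσ.insert_union hτ hac hcb hQ, mem_insert_self _ _⟩
  · rintro π ⟨h, hmem⟩
    exact h.insert_filter_union_filter hmem
  · rintro ⟨σ, τ⟩ ⟨hσ, hτ⟩
    exact Prod.ext (hσ.filter_inside_insert_union hτ) (hσ.filter_outside_insert_union hτ hac)

theorem card_ncPairings_eq_sum [DecidablePred (Q a)] (hab : a < b) :
    #(ncPairings Q a b) = ∑ c ∈ Ioo a b with Q a c,
      #(ncPairings Q (a + 1) c) * #(ncPairings Q (c + 1) b) := by
  have hunion : ncPairings Q a b =
      {c ∈ Ioo a b | Q a c}.biUnion fun c ↦ {π ∈ ncPairings Q a b | (a, c) ∈ π} := by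
    ext π
    simp only [mem_biUnion, mem_filter, mem_Ioo, mem_ncPairings]
    refine ⟨fun h ↦ ?_, fun ⟨_, _, h, _⟩ ↦ h⟩
    obtain ⟨c, hc⟩ := h.exists_mem_left hab
    obtain ⟨-, hcb, hac⟩ := h.bounds _ hc
    exact ⟨c, ⟨⟨hac, hcb⟩, h.rel _ hc⟩, h, hc⟩
  rw [hunion, card_biUnion]
  · refine sum_congr rfl fun c hc ↦ ?_
    obtain ⟨hc, hQ⟩ := mem_filter.1 hc
    obtain ⟨hac, hcb⟩ := mem_Ioo.1 hc
    exact card_filter_mem_ncPairings hac hcb hQ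
  · intro c _ c' _ hne
    refine disjoint_filter.2 fun π hπ hc hc' ↦ hne ?_
    exact congrArg Prod.snd ((mem_ncPairings.1 hπ).eq_of_meet _ hc _ hc' (Or.inl rfl))

end Pairings

section ModTwoMul

variable {p a d g : ℕ}

/-- The number of noncrossing pairings of `[a, a + 2n)` into blocks `{x, y}` with `x + y ≡ 1`
modulo `2p`. -/
noncomputable def modPairingCount (p a n : ℕ) : ℕ :=
  #(ncPairings (fun x y ↦ x + y ≡ 1 [MOD 2 * p]) a (a + 2 * n))

theorem modPairingCount_zero (p a : ℕ) : modPairingCount p a 0 = 1 :=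
  card_ncPairings_self _ a

theorem add_modEq_one_iff (had : p ∣ a + d) (hd : d < p) {c : ℕ} (hac : a < c) :
    a + c ≡ 1 [MOD 2 * p] ↔ ∃ i, c = a + 2 * (p * i + d) + 1 := by
  obtain ⟨t, ht⟩ := had
  rw [Nat.ModEq.comm, Nat.modEq_iff_dvd' (by omega)]
  constructor
  · rintro ⟨s, hs⟩
    have hts : t ≤ s := by
      by_contra! hst
      have := Nat.mul_le_mul_left p hst
      rw [Nat.mul_succ] at this
      rw [mul_assoc] at hs
      omega
    obtain ⟨i, rfl⟩ := Nat.exists_eq_add_of_le hts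
    refine ⟨i, ?_⟩
    rw [mul_assoc, mul_add p] at hs
    omega
  · rintro ⟨i, rfl⟩
    refine ⟨t + i, ?_⟩
    rw [mul_assoc, mul_add p]
    omega

theorem modPairingCount_eq_sum (had : p ∣ a + d) (hd : d < p) (hg : g < p) (k : ℕ) :
    modPairingCount p a (p * k + (d + 1 + g)) =
      ∑ ij ∈ antidiagonal k, modPairingCount p (a + 1) (p * ij.1 + d) *
        modPairingCount p (a + 2 * (p * ij.1 + d) + 1 + 1) (p * ij.2 + g) := by
  rw [modPairingCount, card_ncPairings_eq_sum (by omega)]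
  symm
  refine sum_bij (fun ij _ ↦ a + 2 * (p * ij.1 + d) + 1) ?_ ?_ ?_ ?_
  · rintro ⟨i, j⟩ hij
    obtain rfl := HasAntidiagonal.mem_antidiagonal.1 hij
    refine mem_filter.2 ⟨mem_Ioo.2 ?_, (add_modEq_one_iff had hd (by omega)).2 ⟨i, rfl⟩⟩
    rw [mul_add p]
    omega
  · rintro ⟨i, j⟩ hij ⟨i', j'⟩ hij' h
    have hmul : p * i = p * i' := by dsimp only at h; omega
    have hi : i = i' := Nat.eq_of_mul_eq_mul_left (by omega) hmul
    rw [HasAntidiagonal.mem_antidiagonal] at hij hij'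
    ext <;> dsimp only at * <;> omega
  · intro c hc
    obtain ⟨hc, hmod⟩ := mem_filter.1 hc
    obtain ⟨hac, hcb⟩ := mem_Ioo.1 hc
    obtain ⟨i, rfl⟩ := (add_modEq_one_iff had hd hac).1 hmod
    have hik : i ≤ k := by
      by_contra! hki
      have := Nat.mul_le_mul_left p hki
      rw [Nat.mul_succ] at this
      omega
    exact ⟨(i, k - i), HasAntidiagonal.mem_antidiagonal.2 (Nat.add_sub_cancel' hik), rfl⟩
  · rintro ⟨i, j⟩ hij
    obtain rfl := HasAntidiagonal.mem_antidiagonal.1 hij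
    have hend : a + 2 * (p * (i + j) + (d + 1 + g)) =
        a + 2 * (p * i + d) + 1 + 1 + 2 * (p * j + g) := by ring
    dsimp only
    rw [modPairingCount, modPairingCount, add_right_comm a 1, hend]

theorem exists_add_one_add_eq_and_dvd_add (hp : 0 < p) (a : ℕ) :
    ∃ d g, d + 1 + g = p ∧ p ∣ a + d := by
  have hlt := Nat.mod_lt (a + p - 1) hp
  have hdiv := Nat.div_add_mod (a + p - 1) p
  exact ⟨p - 1 - (a + p - 1) % p, (a + p - 1) % p, by omega, (a + p - 1) / p, by omega⟩

theorem modPairingCount_mul_add_of_forall_le {k : ℕ}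
    (h : ∀ i ≤ k, ∀ a, modPairingCount p a (p * i) = raney p i 1)
    {i : ℕ} (hi : i ≤ k) (hd : d ≤ p) (had : p ∣ a + d) :
    modPairingCount p (a + 1) (p * i + d) = raney p i (d + 1) := by
  induction d generalizing a i with
  | zero => exact h i hi (a + 1)
  | succ d ih =>
    have had' : p ∣ a + 1 + d := by rwa [add_assoc, add_comm 1]
    rw [← add_zero (d + 1), modPairingCount_eq_sum had' hd (by omega), raney_add]
    refine sum_congr rfl fun jl hjl ↦ ?_
    have hsum := HasAntidiagonal.mem_antidiagonal.1 hjl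
    simp only [add_zero, ih (show jl.1 ≤ k by omega) (by omega) had', h jl.2 (by omega)]

theorem modPairingCount_mul_succ_of_forall_le (hp : 0 < p) {k : ℕ}
    (h : ∀ i ≤ k, ∀ a d, d ≤ p → p ∣ a + d →
      modPairingCount p (a + 1) (p * i + d) = raney p i (d + 1)) (a : ℕ) :
    modPairingCount p a (p * (k + 1)) = raney p (k + 1) 1 := by
  obtain ⟨d, g, hdg, had⟩ := exists_add_one_add_eq_and_dvd_add hp a
  have hsplit : p * (k + 1) = p * k + (d + 1 + g) := by rw [mul_add_one, hdg]
  rw [hsplit, modPairingCount_eq_sum had (by omega) (by omega), raney_succ_one,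
    show p + 1 = d + 1 + (g + 1) by omega, raney_add]
  refine sum_congr rfl fun ij hij ↦ ?_
  have hsum := HasAntidiagonal.mem_antidiagonal.1 hij
  have hag : p ∣ a + 2 * (p * ij.1 + d) + 1 + g := by
    rw [show a + 2 * (p * ij.1 + d) + 1 + g = a + d + p * (2 * ij.1) + p by rw [← hdg]; ring]
    exact (had.add (dvd_mul_right p _)).add dvd_rfl
  rw [h _ (by omega) _ _ (by omega) had, h _ (by omega) _ _ (by omega) hag]

theorem modPairingCount_mul (hp : 0 < p) (a k : ℕ) :
    modPairingCount p a (p * k) = raney p k 1 := by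
  induction k using Nat.strong_induction_on generalizing a with
  | _ k ih =>
    cases k with
    | zero => rw [mul_zero, modPairingCount_zero, raney_zero_left]
    | succ k =>
      refine modPairingCount_mul_succ_of_forall_le hp (fun i hi _ _ ↦ ?_) a
      exact modPairingCount_mul_add_of_forall_le (fun j hj ↦ ih j (Nat.lt_succ_of_le hj)) hi

end ModTwoMul

section Letters

variable {p : ℕ}

/-- The letters `u` and `v` are `l` and `l*`, in either order, for some `l ∈ {1, …, p}`; this is
the condition that `AdaptedNCPP` imposes on the labels of a block. -/
def IsLetterPair (p : ℕ) (u v : ℕ × Bool) : Prop :=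
  ∃ l, 1 ≤ l ∧ l ≤ p ∧ ((u = (l, false) ∧ v = (l, true)) ∨ (u = (l, true) ∧ v = (l, false)))

theorem isLetterPair_letter0_iff {r s : ℕ} (hr : 1 ≤ r) (hs : 1 ≤ s) :
    IsLetterPair p (letter0 p r) (letter0 p s) ↔ r + s = 2 * p + 1 := by
  have h_unstarred {r l : ℕ} : letter0 p r = (l, false) ↔ r ≤ p ∧ r = l := by
    unfold letter0
    split_ifs <;> grind
  have h_starred {r l : ℕ} : letter0 p r = (l, true) ↔ p < r ∧ 2 * p + 1 - r = l := by
    unfold letter0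
    split_ifs <;> grind
  simp only [IsLetterPair, h_unstarred, h_starred]
  constructor
  · rintro ⟨l, hl, -, h | h⟩ <;> omega
  · intro h
    rcases le_total r s with hrs | hsr
    · exact ⟨r, by omega⟩
    · exact ⟨s, by omega⟩

theorem add_modEq_one_iff_sub_one_mod_add {m x y : ℕ} (hm : 0 < m) (hx : 1 ≤ x) (hy : 1 ≤ y) :
    x + y ≡ 1 [MOD m] ↔ (x - 1) % m + 1 + ((y - 1) % m + 1) = m + 1 := by
  obtain ⟨x, rfl⟩ := Nat.exists_eq_add_of_le' hx
  obtain ⟨y, rfl⟩ := Nat.exists_eq_add_of_le' hy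
  have hxm := Nat.mod_lt x hm
  have hym := Nat.mod_lt y hm
  have h_residues : x + 1 + (y + 1) ≡ x % m + y % m + 1 + 1 [MOD m] := by
    rw [show x + 1 + (y + 1) = x + y + 1 + 1 by omega]
    exact ((((Nat.mod_modEq x m).add (Nat.mod_modEq y m)).add_right 1).add_right 1).symm
  have h_dvd : x + 1 + (y + 1) ≡ 1 [MOD m] ↔ m ∣ x % m + y % m + 1 := by
    rw [← Nat.modEq_zero_iff_dvd]
    exact ⟨fun h ↦ Nat.ModEq.add_right_cancel' 1 (h_residues.symm.trans h),
      fun h ↦ h_residues.trans (h.add_right 1)⟩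
  rw [h_dvd, Nat.add_sub_cancel, Nat.add_sub_cancel]
  refine ⟨fun h ↦ ?_, fun h ↦ ⟨1, by omega⟩⟩
  have := Nat.eq_of_dvd_of_lt_two_mul (by omega) h (by omega)
  omega

theorem labelW_zero (p m : ℕ) : labelW p 0 m = letter0 p ((m - 1) % (2 * p) + 1) := by
  rw [labelW, Nat.sub_zero, Nat.add_mod_right]

theorem isLetterPair_labelW_iff (hp : 1 ≤ p) {x y : ℕ} (hx : 1 ≤ x) (hy : 1 ≤ y) :
    IsLetterPair p (labelW p 0 x) (labelW p 0 y) ↔ x + y ≡ 1 [MOD 2 * p] := by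
  rw [add_modEq_one_iff_sub_one_mod_add (by omega) hx hy, labelW_zero, labelW_zero,
    isLetterPair_letter0_iff (by omega) (by omega)]

theorem adaptedNCPP_iff_isNCPairing (hp : 1 ≤ p) (k : ℕ) (π : Finset (ℕ × ℕ)) :
    AdaptedNCPP p 0 k π ↔
      IsNCPairing (fun x y ↦ x + y ≡ 1 [MOD 2 * p]) 1 (1 + 2 * (p * k)) π := by
  constructor
  · rintro ⟨⟨bounds, cover, eq_of_meet, noncrossing⟩, adapted⟩
    rw [mul_assoc] at bounds cover
    refine ⟨fun x hx ↦ ?_, fun m hm hmk ↦ cover m hm (by omega), eq_of_meet, noncrossing,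
      fun x hx ↦ ?_⟩
    · have := bounds x hx; omega
    · have := bounds x hx
      exact (isLetterPair_labelW_iff hp (by omega) (by omega)).1 (adapted x hx)
  · intro h
    rw [AdaptedNCPP, IsNCPP, mul_assoc]
    refine ⟨⟨fun x hx ↦ ?_, fun m hm hmk ↦ h.cover m hm (by omega), h.eq_of_meet,
      h.noncrossing⟩, fun x hx ↦ ?_⟩
    · have := h.bounds x hx; omega
    · have := h.bounds x hx
      exact (isLetterPair_labelW_iff hp (by omega) (by omega)).2 (h.rel x hx)

theorem card_NCset_eq_modPairingCount (hp : 1 ≤ p) (k : ℕ) :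
    #(NCset p 0 k) = modPairingCount p 1 (p * k) := by
  classical
  rw [modPairingCount]
  congr 1
  ext π
  rw [mem_ncPairings, ← adaptedNCPP_iff_isNCPairing hp, NCset, mem_filter, mem_powerset]
  refine and_iff_right_of_imp fun h x hx ↦ ?_
  have hbounds := h.1.1 x hx
  simp only [mem_product, mem_Icc]
  omega

end Letters

/-- For `p, k ≥ 1`, the number of noncrossing pair partitions of `{1, …, 2pk}`
adapted to `W₀ᵏ` is the Fuss–Catalan number:
`(pk + 1) · |NC²₂ₚₖ(W₀ᵏ)| = C((p+1)k, k)`. -/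
theorem card_NCset_fussCatalan (p k : ℕ) (hp : 1 ≤ p) (hk : 1 ≤ k) :
    (p * k + 1) * (NCset p 0 k).card = Nat.choose ((p + 1) * k) k := by
  rw [card_NCset_eq_modPairingCount hp, modPairingCount_mul hp, mul_raney_one]
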